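/- Let ϑ₁, ϑ₂ be Beurling weights on ℝ^d with ϑ₁ satisfying the Beurling–Domar condition, and let 1 ≤ q, r < ∞. Then A^{1,1,q,r}_{ϑ₁,ϑ₂}(ℝ^d) is a dense subspace of the Beurling algebra L¹_{ϑ₁}(ℝ^d) with respect to the norm ‖·‖_{1,ϑ₁}, and moreover ‖f‖_{1,ϑ₁} ≤ ‖f‖_A for every f ∈ A^{1,1,q,r}_{ϑ₁,ϑ₂}(ℝ^d). -/

import Mathlib

open MeasureTheory Filter Topology
open scoped ENNReal NNReal BigOperators

noncomputable section

/-- The unit cube `α + [0,1)^d` at the integer point `α ∈ ℤ^d`. -/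
def cube {d : ℕ} (α : Fin d → ℤ) : Set (Fin d → ℝ) :=
  Set.univ.pi fun i => Set.Ico (α i : ℝ) ((α i : ℝ) + 1)

/-- The weighted amalgam norm `‖f‖_{pq,ω}` of the space `(L^p_ω, ℓ^q)`. -/
def amalgamNorm {d : ℕ} (p q : ℝ) (ω : (Fin d → ℝ) → ℝ) (f : (Fin d → ℝ) → ℂ) : ℝ≥0∞ :=
  (∑' α : Fin d → ℤ,
      (eLpNorm (fun x => ω x • f x) (ENNReal.ofReal p) (volume.restrict (cube α))) ^ q) ^ (1 / q)

/-- Membership in the weighted amalgam space `(L^p_ω, ℓ^q)`. -/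
def MemAmalgam {d : ℕ} (p q : ℝ) (ω : (Fin d → ℝ) → ℝ) (f : (Fin d → ℝ) → ℂ) : Prop :=
  Measurable f ∧ amalgamNorm p q ω f < ⊤

/-- A Beurling weight: measurable, `ϑ ≥ 1` and submultiplicative. -/
def IsBeurling {d : ℕ} (ϑ : (Fin d → ℝ) → ℝ) : Prop :=
  Measurable ϑ ∧ (∀ x, 1 ≤ ϑ x) ∧ ∀ x y, ϑ (x + y) ≤ ϑ x * ϑ y

/-- The Fourier transform `f̂(ξ) = ∫ f(x) e^{-2πi⟨x,ξ⟩} dx`. -/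
def fourierT {d : ℕ} (f : (Fin d → ℝ) → ℂ) (ξ : Fin d → ℝ) : ℂ :=
  ∫ x : Fin d → ℝ,
    Complex.exp (-(2 * (Real.pi : ℂ) * Complex.I * ∑ i, (x i : ℂ) * (ξ i : ℂ))) * f x

/-- The norm of `A^{p,1,q,r}_{ϑ₁,ϑ₂}(ℝ^d)`. -/
def ANorm {d : ℕ} (p q r : ℝ) (ϑ₁ ϑ₂ : (Fin d → ℝ) → ℝ) (f : (Fin d → ℝ) → ℂ) : ℝ≥0∞ :=
  amalgamNorm p 1 ϑ₁ f + amalgamNorm q r ϑ₂ (fourierT f)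

/-- Membership in `A^{p,1,q,r}_{ϑ₁,ϑ₂}(ℝ^d)`. -/
def MemA {d : ℕ} (p q r : ℝ) (ϑ₁ ϑ₂ : (Fin d → ℝ) → ℝ) (f : (Fin d → ℝ) → ℂ) : Prop :=
  MemAmalgam p 1 ϑ₁ f ∧ MemAmalgam q r ϑ₂ (fourierT f)

/-- Convolution `(f∗g)(x) = ∫ f(x−t)g(t) dt`. -/
def convF {d : ℕ} (f g : (Fin d → ℝ) → ℂ) (x : Fin d → ℝ) : ℂ :=
  ∫ t : Fin d → ℝ, f (x - t) * g t

/-- `ϑ ≺ ϑ'` : domination of weights up to a constant. -/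
def Prec {d : ℕ} (ϑ ϑ' : (Fin d → ℝ) → ℝ) : Prop :=
  ∃ C : ℝ, 0 < C ∧ ∀ x, ϑ x ≤ C * ϑ' x

/-- The Beurling–Domar condition `∑_{n≥1} log ϑ(nx)/n² < ∞`. -/
def BeurlingDomar {d : ℕ} (ϑ : (Fin d → ℝ) → ℝ) : Prop :=
  ∀ x : Fin d → ℝ, Summable fun n : ℕ => Real.log (ϑ ((n : ℝ) • x)) / (n : ℝ) ^ 2

/-- `w` does not tend to zero as `|x| → ∞`. -/
def NotVanishingAtInfty {d : ℕ} (w : (Fin d → ℝ) → ℝ) : Prop :=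
  ∃ δ : ℝ, 0 < δ ∧ ∀ R : ℝ, 0 < R → ∃ x : Fin d → ℝ, R < ‖x‖ ∧ δ ≤ w x

end

/-!
A Beurling weight is bounded near the origin by Steinhaus' theorem, so submultiplicativity makes it
`O(exp (b‖x‖))`. A function which, together with its Fourier transform, decays faster than every
exponential therefore lies in all the spaces `A^{p,1,q,r}_{ϑ₁,ϑ₂}`. For `h` continuous with compact
support and the self-dual Gaussian `γ`, the average `∫ γ(t) h(x - s t) dt` has this property for
`s ≠ 0`, since its Fourier transform is `γ(s ξ) ĥ(ξ)`; it tends to `h` in `L¹_{ϑ₁}` as `s → 0` by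
dominated convergence. Continuous functions with compact support are dense in `L¹_{ϑ₁}`.
-/

open Asymptotics

section SuperexpDecay

variable {E F : Type*} [NormedAddCommGroup E] [NormedAddCommGroup F]

/-- Decay faster than every exponential `exp (-a‖x‖)`. Beurling weights grow at most exponentially,
so this is a decay class stable under multiplication by all of them. -/
def SuperexpDecay (f : E → F) : Prop :=
  ∀ a : ℝ, f =O[⊤] fun x ↦ Real.exp (-a * ‖x‖)

theorem superexpDecay_of_hasCompactSupport [NormedSpace ℝ F] {f : E → F} (hf : Continuous f)
    (hsupp : HasCompactSupport f) : SuperexpDecay f := by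
  intro a
  obtain ⟨C, hC⟩ := (hsupp.smul_left (f := fun x ↦ Real.exp (a * ‖x‖))).exists_bound_of_continuous
    (by fun_prop)
  refine isBigO_top.2 ⟨C, fun x ↦ ?_⟩
  rw [neg_mul, Real.exp_neg, Real.norm_of_nonneg (by positivity), ← div_eq_mul_inv,
    le_div_iff₀ (Real.exp_pos _), mul_comm]
  simpa [norm_smul] using hC x

namespace SuperexpDecay

variable {f : E → F}

theorem exists_norm_le (hf : SuperexpDecay f) : ∃ C, ∀ x, ‖f x‖ ≤ C := by
  simpa using isBigO_top.1 (hf 0)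

theorem comp_smul [NormedSpace ℝ E] (hf : SuperexpDecay f) {s : ℝ} (hs : s ≠ 0) :
    SuperexpDecay fun x ↦ f (s • x) := by
  intro a
  refine ((hf (a / |s|)).comp_tendsto (tendsto_top (f := fun x ↦ s • x))).congr_right fun x ↦ ?_
  simp only [Function.comp_apply, norm_smul, Real.norm_eq_abs]
  field_simp

theorem smul_of_isBigO_exp {𝕜 : Type*} [NormedField 𝕜] [NormedSpace 𝕜 F] (hf : SuperexpDecay f)
    {ω : E → 𝕜} {b : ℝ} (hω : ω =O[⊤] fun x ↦ Real.exp (b * ‖x‖)) :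
    SuperexpDecay fun x ↦ ω x • f x := by
  intro a
  refine (hω.smul (hf (a + b))).congr_right fun x ↦ ?_
  rw [smul_eq_mul, ← Real.exp_add]
  ring_nf

end SuperexpDecay

theorem integrable_exp_neg_mul_norm [SecondCountableTopology E] [MeasurableSpace E]
    [BorelSpace E] {μ : Measure E} [μ.HasTemperateGrowth] {b : ℝ} (hb : 0 < b) :
    Integrable (fun x ↦ Real.exp (-b * ‖x‖)) μ := by
  set n := μ.integrablePower
  have h_pow (x : E) : ‖x‖ ^ n * Real.exp (-b * ‖x‖) ≤ n.factorial / b ^ n := by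
    have h := Real.pow_div_factorial_le_exp _ (mul_nonneg hb.le (norm_nonneg x)) n
    rw [neg_mul, Real.exp_neg, ← div_eq_mul_inv, div_le_div_iff₀ (by positivity) (by positivity),
      mul_comm, ← mul_pow, mul_comm (n.factorial : ℝ)]
    rwa [div_le_iff₀ (by positivity)] at h
  have h := integrable_of_le_of_pow_mul_le (μ := μ) (k := 0) (C₁ := 1) (C₂ := n.factorial / b ^ n)
    (f := fun x ↦ Real.exp (-b * ‖x‖)) (fun x ↦ ?_) (fun x ↦ ?_) ?_
  · simpa using h
  · simpa using mul_nonneg hb.le (norm_nonneg x)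
  · simpa using h_pow x
  · exact (by fun_prop : Continuous _).aestronglyMeasurable

theorem SuperexpDecay.integrable [SecondCountableTopology E] [MeasurableSpace E]
    [BorelSpace E] {μ : Measure E} [μ.HasTemperateGrowth] {f : E → F} (hf : SuperexpDecay f)
    (hfm : AEStronglyMeasurable f μ) : Integrable f μ := by
  obtain ⟨C, hC⟩ := isBigO_top.1 (hf 1)
  refine ((integrable_exp_neg_mul_norm one_pos).const_mul C).mono' hfm (.of_forall fun x ↦ ?_)
  simpa using hC x

end SuperexpDecay

section Submultiplicative

-- Steinhaus: some set where `ϑ x` and `ϑ (-x)` are at most `n` has positive measure, so its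
-- difference set is a neighbourhood of `0`.
theorem eventually_nhds_zero_le_of_submultiplicative {G : Type*} [AddGroup G] [TopologicalSpace G]
    [IsTopologicalAddGroup G] [LocallyCompactSpace G] [SecondCountableTopology G]
    [MeasurableSpace G] [BorelSpace G] {ϑ : G → ℝ} (hϑm : Measurable ϑ) (hϑ0 : ∀ x, 0 ≤ ϑ x)
    (hϑ : ∀ x y, ϑ (x + y) ≤ ϑ x * ϑ y) : ∃ K, ∀ᶠ x in 𝓝 0, ϑ x ≤ K := by
  let B (n : ℕ) : Set G := {x | ϑ x ≤ n ∧ ϑ (-x) ≤ n}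
  have hBm (n : ℕ) : MeasurableSet (B n) :=
    (measurableSet_le hϑm measurable_const).inter
      (measurableSet_le (hϑm.comp measurable_neg) measurable_const)
  have hBU : ⋃ n, B n = Set.univ := by
    refine Set.eq_univ_of_forall fun x ↦ Set.mem_iUnion.2 ?_
    obtain ⟨n, hn⟩ := exists_nat_ge (max (ϑ x) (ϑ (-x)))
    exact ⟨n, (le_max_left _ _).trans hn, (le_max_right _ _).trans hn⟩
  obtain ⟨n, hn⟩ : ∃ n, 0 < Measure.addHaar (B n) := by
    refine exists_measure_pos_of_not_measure_iUnion_null ?_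
    rw [hBU]
    exact NeZero.ne _
  refine ⟨n * n, ?_⟩
  filter_upwards [Measure.sub_mem_nhds_zero_of_addHaar_pos Measure.addHaar (B n) (hBm n) hn]
  rintro _ ⟨u, hu, v, hv, rfl⟩
  change ϑ (u - v) ≤ _
  rw [sub_eq_add_neg]
  exact (hϑ u (-v)).trans (mul_le_mul hu.1 hv.2 (hϑ0 _) n.cast_nonneg)

theorem apply_succ_nsmul_le_pow {M : Type*} [AddMonoid M] {ϑ : M → ℝ} (hϑ0 : ∀ x, 0 ≤ ϑ x)
    (hϑ : ∀ x y, ϑ (x + y) ≤ ϑ x * ϑ y) (y : M) (n : ℕ) : ϑ ((n + 1) • y) ≤ ϑ y ^ (n + 1) := by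
  induction n with
  | zero => simp
  | succ n ih =>
    rw [succ_nsmul, pow_succ]
    exact (hϑ _ _).trans (mul_le_mul_of_nonneg_right ih (hϑ0 y))

theorem exists_isBigO_exp_of_submultiplicative {E : Type*} [NormedAddCommGroup E] [NormedSpace ℝ E]
    {ϑ : E → ℝ} (hϑ0 : ∀ x, 0 ≤ ϑ x) (hϑ : ∀ x y, ϑ (x + y) ≤ ϑ x * ϑ y)
    (hbdd : ∃ K, ∀ᶠ x in 𝓝 0, ϑ x ≤ K) : ∃ b, ϑ =O[⊤] fun x ↦ Real.exp (b * ‖x‖) := by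
  obtain ⟨K, hK⟩ := hbdd
  obtain ⟨ε, hε, hεK⟩ := Metric.eventually_nhds_iff.1 hK
  set L := max K 1
  have hL : 1 ≤ L := le_max_right _ _
  refine ⟨Real.log L / ε, isBigO_top.2 ⟨L, fun x ↦ ?_⟩⟩
  set m := ⌊‖x‖ / ε⌋₊
  set y := ((m + 1 : ℕ) : ℝ)⁻¹ • x
  have hyx : (m + 1) • y = x := by
    rw [← Nat.cast_smul_eq_nsmul ℝ, smul_inv_smul₀ (by positivity)]
  have hy : ‖y‖ < ε := by
    rw [norm_smul, norm_inv, Real.norm_natCast, inv_mul_lt_iff₀ (by positivity),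
      ← div_lt_iff₀ hε]
    exact_mod_cast Nat.lt_floor_add_one _
  rw [Real.norm_of_nonneg (hϑ0 x), Real.norm_of_nonneg (Real.exp_nonneg _)]
  calc ϑ x ≤ ϑ y ^ (m + 1) := hyx ▸ apply_succ_nsmul_le_pow hϑ0 hϑ y m
    _ ≤ L ^ (m + 1) :=
      pow_le_pow_left₀ (hϑ0 y) ((hεK (by simpa using hy)).trans (le_max_left _ _)) _
    _ = L * Real.exp (Real.log L * m) := by
      rw [pow_succ', Real.exp_mul, Real.exp_log (by positivity), Real.rpow_natCast]
    _ ≤ L * Real.exp (Real.log L / ε * ‖x‖) := by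
      have hm : (m : ℝ) ≤ ‖x‖ / ε := Nat.floor_le (by positivity)
      rw [div_mul_eq_mul_div, ← mul_div_assoc']
      have := Real.log_nonneg hL
      gcongr

theorem IsBeurling.exists_isBigO_exp {d : ℕ} {ϑ : (Fin d → ℝ) → ℝ} (hϑ : IsBeurling ϑ) :
    ∃ b, ϑ =O[⊤] fun x ↦ Real.exp (b * ‖x‖) := by
  obtain ⟨hϑm, hϑ1, hϑmul⟩ := hϑ
  have hϑ0 (x) : 0 ≤ ϑ x := zero_le_one.trans (hϑ1 x)
  exact exists_isBigO_exp_of_submultiplicative hϑ0 hϑmul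
    (eventually_nhds_zero_le_of_submultiplicative hϑm hϑ0 hϑmul)

end Submultiplicative

section Amalgam

variable {d : ℕ}

theorem cube_eq_preimage_floor (α : Fin d → ℤ) : cube α = (fun x i ↦ ⌊x i⌋) ⁻¹' {α} := by
  ext x
  simp [cube, funext_iff, Int.floor_eq_iff]

theorem measurableSet_cube (α : Fin d → ℤ) : MeasurableSet (cube α) :=
  .univ_pi fun _ ↦ measurableSet_Ico

theorem tsum_lintegral_cube (f : (Fin d → ℝ) → ℝ≥0∞) :
    ∑' α, ∫⁻ x in cube α, f x = ∫⁻ x, f x := by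
  have h_disjoint : Pairwise (Function.onFun Disjoint (cube (d := d))) := by
    simpa only [funext cube_eq_preimage_floor] using pairwise_disjoint_fiber _
  have h_union : ⋃ α, cube (d := d) α = Set.univ := by
    simp only [cube_eq_preimage_floor, ← Set.preimage_iUnion, Set.iUnion_of_singleton,
      Set.preimage_univ]
  rw [← lintegral_iUnion measurableSet_cube h_disjoint, h_union, Measure.restrict_univ]

theorem volume_cube (α : Fin d → ℤ) : volume (cube α) = 1 := by
  simp [cube, volume_pi_pi]

theorem norm_sub_le_one_of_mem_cube {α : Fin d → ℤ} {x y : Fin d → ℝ} (hx : x ∈ cube α)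
    (hy : y ∈ cube α) : ‖x - y‖ ≤ 1 := by
  refine (pi_norm_le_iff_of_nonneg zero_le_one).2 fun i ↦ abs_le.2 ?_
  have hxi := hx i trivial
  have hyi := hy i trivial
  simp only [Set.mem_Ico, Pi.sub_apply] at hxi hyi ⊢
  constructor <;> linarith

theorem amalgamNorm_one_one (ω : (Fin d → ℝ) → ℝ) (f : (Fin d → ℝ) → ℂ) :
    amalgamNorm 1 1 ω f = eLpNorm (fun x ↦ ω x • f x) 1 volume := by
  simp [amalgamNorm, eLpNorm_one_eq_lintegral_enorm, tsum_lintegral_cube]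

theorem eLpNorm_restrict_cube_le {f : (Fin d → ℝ) → ℂ} {C a : ℝ} (ha : 0 ≤ a)
    (hf : ∀ x, ‖f x‖ ≤ C * Real.exp (-a * ‖x‖)) (p : ℝ≥0∞) {α : Fin d → ℤ} {y : Fin d → ℝ}
    (hy : y ∈ cube α) :
    eLpNorm f p (volume.restrict (cube α)) ≤
      ENNReal.ofReal (C * Real.exp a * Real.exp (-a * ‖y‖)) := by
  have hC : 0 ≤ C := by simpa using (norm_nonneg _).trans (hf 0)
  have h_bound : ∀ᵐ x ∂volume.restrict (cube α), ‖f x‖ ≤ C * Real.exp a * Real.exp (-a * ‖y‖) := by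
    filter_upwards [ae_restrict_mem (measurableSet_cube α)] with x hx
    have hyx : ‖y‖ - ‖x‖ ≤ 1 := (norm_sub_norm_le y x).trans (norm_sub_le_one_of_mem_cube hy hx)
    refine (hf x).trans ?_
    rw [mul_assoc, ← Real.exp_add]
    gcongr
    nlinarith
  simpa [volume_cube] using eLpNorm_le_of_ae_bound (p := p) h_bound

theorem amalgamNorm_lt_top {p r a : ℝ} (hr : 0 < r) (ha : 0 < a) {ω : (Fin d → ℝ) → ℝ}
    {f : (Fin d → ℝ) → ℂ}
    (hf : (fun x ↦ ω x • f x) =O[⊤] fun x : Fin d → ℝ ↦ Real.exp (-a * ‖x‖)) :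
    amalgamNorm p r ω f < ⊤ := by
  obtain ⟨C, hC⟩ := isBigO_top.1 hf
  simp only [Real.norm_of_nonneg (Real.exp_nonneg _)] at hC
  set B := C * Real.exp a
  have hB : 0 ≤ B := mul_nonneg (by simpa using (norm_nonneg _).trans (hC 0)) (Real.exp_nonneg _)
  have h_cube (α : Fin d → ℤ) :
      eLpNorm (fun x ↦ ω x • f x) (.ofReal p) (volume.restrict (cube α)) ^ r ≤
        ∫⁻ y in cube α, ENNReal.ofReal (B ^ r * Real.exp (-(a * r) * ‖y‖)) := by
    calc _ = ∫⁻ _ in cube α,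
          eLpNorm (fun x ↦ ω x • f x) (.ofReal p) (volume.restrict (cube α)) ^ r := by
          simp [volume_cube]
      _ ≤ _ := setLIntegral_mono' (measurableSet_cube α) fun y hy ↦ by
          refine (ENNReal.rpow_le_rpow (eLpNorm_restrict_cube_le ha.le hC _ hy) hr.le).trans_eq ?_
          rw [ENNReal.ofReal_rpow_of_nonneg (by positivity) hr.le,
            Real.mul_rpow hB (Real.exp_nonneg _), ← Real.exp_mul]
          ring_nf
  refine ENNReal.rpow_lt_top_of_nonneg (by positivity) (ne_top_of_le_ne_top ?_
    (ENNReal.tsum_le_tsum h_cube))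
  rw [tsum_lintegral_cube]
  exact ((integrable_exp_neg_mul_norm (by positivity)).const_mul _).lintegral_lt_top.ne

end Amalgam

section Mollify

variable {E F : Type*} [NormedAddCommGroup E] [NormedSpace ℝ E] [MeasurableSpace E]
  [NormedAddCommGroup F] [NormedSpace ℝ F] {μ : Measure E} {γ : E → ℝ} {h : E → F}

/-- The convolution of `h` with the rescaled kernel `s⁻ᵈ γ(· / s)`, written after the substitution
`t ↦ s t` so that `s = 0` is allowed and gives `(∫ γ) • h`. -/
noncomputable def mollify (μ : Measure E) (γ : E → ℝ) (s : ℝ) (h : E → F) (x : E) : F :=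
  ∫ t, γ t • h (x - s • t) ∂μ

theorem mollify_zero [CompleteSpace F] (hγ : ∫ t, γ t ∂μ = 1) : mollify μ γ 0 h = h := by
  ext x
  simp [mollify, integral_smul_const, hγ]

theorem continuous_mollify [OpensMeasurableSpace E] [SecondCountableTopology E]
    (hγ : Integrable γ μ) (hh : Continuous h) {C : ℝ} (hC : ∀ x, ‖h x‖ ≤ C) :
    Continuous fun p : ℝ × E ↦ mollify μ γ p.1 h p.2 := by
  refine continuous_of_dominated (bound := fun t ↦ ‖γ t‖ * C) (fun p ↦ ?_)
    (fun p ↦ .of_forall fun t ↦ ?_) (hγ.norm.mul_const C) (.of_forall fun t ↦ by fun_prop)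
  · exact hγ.aestronglyMeasurable.smul
      (by fun_prop : Continuous fun t ↦ h (p.2 - p.1 • t)).aestronglyMeasurable
  · rw [norm_smul]
    gcongr
    exact hC _

variable [BorelSpace E] [SecondCountableTopology E] [μ.HasTemperateGrowth]

theorem exists_norm_mollify_le_exp (hγm : AEStronglyMeasurable γ μ) (hγ : SuperexpDecay γ)
    (hh : SuperexpDecay h) (a S : ℝ) :
    ∃ D, ∀ s, |s| ≤ S → ∀ x, ‖mollify μ γ s h x‖ ≤ D * Real.exp (-a * ‖x‖) := by
  obtain ⟨C, hC⟩ := isBigO_top.1 (hh a)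
  simp only [Real.norm_of_nonneg (Real.exp_nonneg _)] at hC
  have hC0 : 0 ≤ C := by simpa using (norm_nonneg _).trans (hC 0)
  have h_exp : Continuous fun t : E ↦ Real.exp (|a| * S * ‖t‖) := by fun_prop
  have h_int : Integrable (fun t ↦ Real.exp (|a| * S * ‖t‖) • γ t) μ :=
    (hγ.smul_of_isBigO_exp (isBigO_refl _ _)).integrable
      (h_exp.aestronglyMeasurable.smul hγm)
  refine ⟨C * ∫ t, ‖Real.exp (|a| * S * ‖t‖) • γ t‖ ∂μ, fun s hs x ↦ ?_⟩
  rw [mul_right_comm, ← integral_const_mul]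
  refine norm_integral_le_of_norm_le (h_int.norm.const_mul _) (.of_forall fun t ↦ ?_)
  have h_shift : -a * ‖x - s • t‖ ≤ -a * ‖x‖ + |a| * S * ‖t‖ := by
    have h_tri : |‖x‖ - ‖x - s • t‖| ≤ S * ‖t‖ := by
      refine (abs_norm_sub_norm_le _ _).trans ?_
      rw [sub_sub_cancel, norm_smul]
      gcongr
      exact hs
    have := (le_abs_self _).trans_eq (abs_mul a (‖x‖ - ‖x - s • t‖))
    nlinarith [abs_nonneg a]
  calc ‖γ t • h (x - s • t)‖ ≤ ‖γ t‖ * (C * Real.exp (-a * ‖x‖ + |a| * S * ‖t‖)) := by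
        rw [norm_smul]
        gcongr
        exact (hC _).trans (by gcongr)
    _ = C * Real.exp (-a * ‖x‖) * ‖Real.exp (|a| * S * ‖t‖) • γ t‖ := by
        rw [norm_smul, Real.norm_of_nonneg (Real.exp_nonneg _), Real.exp_add]
        ring

theorem superexpDecay_mollify (hγm : AEStronglyMeasurable γ μ) (hγ : SuperexpDecay γ)
    (hh : SuperexpDecay h) (s : ℝ) : SuperexpDecay (mollify μ γ s h) := by
  intro a
  obtain ⟨D, hD⟩ := exists_norm_mollify_le_exp hγm hγ hh a |s|
  exact isBigO_top.2 ⟨D, fun x ↦ by simpa using hD s le_rfl x⟩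

theorem tendsto_eLpNorm_smul_sub_mollify [CompleteSpace F] (hγm : AEStronglyMeasurable γ μ)
    (hγ : SuperexpDecay γ) (hγ1 : ∫ t, γ t ∂μ = 1) (hhc : Continuous h) (hh : SuperexpDecay h)
    {ω : E → ℝ} (hωm : Measurable ω) {b : ℝ}
    (hω : ω =O[⊤] fun x ↦ Real.exp (b * ‖x‖)) :
    Tendsto (fun s ↦ eLpNorm (fun x ↦ ω x • (h x - mollify μ γ s h x)) 1 μ) (𝓝 0) (𝓝 0) := by
  obtain ⟨M, hM⟩ := hh.exists_norm_le
  obtain ⟨D, hD⟩ := exists_norm_mollify_le_exp hγm hγ hh (b + 1) 1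
  obtain ⟨C, hC⟩ := isBigO_top.1 hω
  have h_cont := continuous_mollify (hγ.integrable hγm) hhc hM
  have h_zero : mollify μ γ 0 h = h := mollify_zero hγ1
  have h_bound (s : ℝ) (hs : |s| ≤ 1) (x : E) :
      ‖ω x • (h x - mollify μ γ s h x)‖ ≤ C * (2 * D) * Real.exp (-1 * ‖x‖) := by
    have hhx : ‖h x‖ ≤ D * Real.exp (-(b + 1) * ‖x‖) := by simpa [h_zero] using hD 0 (by simp) x
    calc ‖ω x • (h x - mollify μ γ s h x)‖
        ≤ C * Real.exp (b * ‖x‖) * (2 * (D * Real.exp (-(b + 1) * ‖x‖))) := by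
          rw [norm_smul, two_mul]
          refine mul_le_mul (by simpa using hC x) ((norm_sub_le _ _).trans
            (add_le_add hhx (hD s hs x))) (norm_nonneg _) ?_
          simpa using (norm_nonneg _).trans (hC x)
      _ = C * (2 * D) * Real.exp (-1 * ‖x‖) := by
          rw [show -1 * ‖x‖ = b * ‖x‖ + -(b + 1) * ‖x‖ by ring, Real.exp_add]
          ring
  simp only [eLpNorm_one_eq_lintegral_enorm]
  rw [← lintegral_zero (μ := μ)]
  refine tendsto_lintegral_filter_of_dominated_convergence
    (fun x ↦ ENNReal.ofReal (C * (2 * D) * Real.exp (-1 * ‖x‖))) (.of_forall fun s ↦ ?_) ?_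
    ((integrable_exp_neg_mul_norm one_pos).const_mul _).lintegral_lt_top.ne (.of_forall fun x ↦ ?_)
  · simp only [enorm_smul]
    exact hωm.enorm.mul (hhc.sub (h_cont.comp (.prodMk_right s))).enorm.measurable
  · filter_upwards [Metric.closedBall_mem_nhds (0 : ℝ) one_pos] with s hs
    filter_upwards with x
    rw [← ofReal_norm]
    exact ENNReal.ofReal_le_ofReal (h_bound s (by simpa using hs) x)
  · have h_lim : Continuous fun s ↦ ‖ω x • (h x - mollify μ γ s h x)‖ₑ := by fun_prop
    simpa [h_zero] using h_lim.tendsto 0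

end Mollify

section Fourier

theorem integrable_prod_smul_comp_sub_smul {E F : Type*} [NormedAddCommGroup E] [NormedSpace ℝ E]
    [MeasurableSpace E] [BorelSpace E] [SecondCountableTopology E] [NormedAddCommGroup F]
    [NormedSpace ℝ F] {μ : Measure E} [SFinite μ] [μ.IsAddRightInvariant] {γ : E → ℝ} {h : E → F}
    (hγ : Integrable γ μ) (hh : Integrable h μ) (s : ℝ) :
    Integrable (fun p : E × E ↦ γ p.1 • h (p.2 - s • p.1)) (μ.prod μ) := by
  have h_shear : MeasurePreserving (fun p : E × E ↦ (p.1, p.2 - s • p.1)) (μ.prod μ) (μ.prod μ) :=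
    (MeasurePreserving.id μ).skew_product (g := fun t x ↦ x - s • t) (by fun_prop)
      (.of_forall fun t ↦ (measurePreserving_sub_right μ (s • t)).map_eq)
  exact h_shear.integrable_comp_of_integrable (hγ.smul_prod hh)

variable {V W F : Type*} [NormedAddCommGroup V] [NormedSpace ℝ V] [MeasurableSpace V]
  [BorelSpace V] [SecondCountableTopology V] [TopologicalSpace W] [AddCommGroup W] [Module ℝ W]
  [NormedAddCommGroup F] [NormedSpace ℂ F] [CompleteSpace F]
  {μ : Measure V} [SFinite μ] [μ.IsAddRightInvariant]

open VectorFourier in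
theorem fourierIntegral_mollify {e : AddChar ℝ Circle} (he : Continuous e)
    {L : V →ₗ[ℝ] W →ₗ[ℝ] ℝ} (hL : Continuous fun p : V × W ↦ L p.1 p.2) {γ : V → ℝ} {h : V → F}
    (hγ : Integrable γ μ) (hh : Integrable h μ) (s : ℝ) (w : W) :
    fourierIntegral e μ L (mollify μ γ s h) w =
      fourierIntegral e μ L (fun t ↦ (γ t : ℂ)) (s • w) • fourierIntegral e μ L h w := by
  have h_int : Integrable (fun p : V × V ↦ e (-L p.2 w) • γ p.1 • h (p.2 - s • p.1))
      (μ.prod μ) := by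
    have h_prod := integrable_prod_smul_comp_sub_smul hγ hh s
    have h_char : Continuous fun p : V × V ↦ e (-L p.2 w) := by fun_prop
    exact h_prod.norm.mono' (h_char.aestronglyMeasurable.fun_smul h_prod.1)
      (.of_forall fun p ↦ (Circle.norm_smul _ _).le)
  calc fourierIntegral e μ L (mollify μ γ s h) w
      = ∫ x, ∫ t, e (-L x w) • γ t • h (x - s • t) ∂μ ∂μ := by
        simp only [fourierIntegral, mollify, Circle.smul_def, integral_smul]
    _ = ∫ t, γ t • fourierIntegral e μ L (h ∘ fun x ↦ x + -(s • t)) w ∂μ := by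
        rw [← integral_integral_swap h_int]
        simp only [fourierIntegral, Function.comp_apply, ← sub_eq_add_neg, smul_comm _ (γ _),
          integral_smul]
    _ = ∫ t, (e (-L t (s • w)) • (γ t : ℂ)) • fourierIntegral e μ L h w ∂μ := by
        simp only [fourierIntegral_comp_add_right, map_neg, map_smul, LinearMap.neg_apply,
          LinearMap.smul_apply, smul_assoc, Complex.coe_smul, smul_comm _ (γ _)]
    _ = _ := integral_smul_const _ _

variable {ι : Type*} [Fintype ι]

theorem continuous_dotProductBilin :
    Continuous fun p : (ι → ℝ) × (ι → ℝ) ↦ dotProductBilin ℝ ℝ p.1 p.2 := by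
  simp only [dotProductBilin_apply_apply, dotProduct]
  fun_prop

/-- The Gaussian `exp (-π ∑ tᵢ²)`, the averaging kernel of the density argument, normalized so as to
be its own Fourier transform. -/
noncomputable def gaussianKernel (t : ι → ℝ) : ℝ :=
  Real.exp (-Real.pi * ∑ i, t i ^ 2)

theorem continuous_gaussianKernel : Continuous (gaussianKernel (ι := ι)) := by
  unfold gaussianKernel
  fun_prop

theorem sq_norm_le_sum_sq (x : ι → ℝ) : ‖x‖ ^ 2 ≤ ∑ i, x i ^ 2 := by
  rw [← Real.le_sqrt (norm_nonneg _) (by positivity)]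
  refine (pi_norm_le_iff_of_nonneg (Real.sqrt_nonneg _)).2 fun i ↦ Real.le_sqrt_of_sq_le ?_
  rw [Real.norm_eq_abs, sq_abs]
  exact Finset.single_le_sum (f := fun i ↦ x i ^ 2) (fun _ _ ↦ sq_nonneg _) (Finset.mem_univ i)

theorem superexpDecay_gaussianKernel : SuperexpDecay (gaussianKernel (ι := ι)) := by
  intro a
  refine isBigO_top.2 ⟨Real.exp (a ^ 2 / (4 * Real.pi)), fun t ↦ ?_⟩
  rw [gaussianKernel, Real.norm_of_nonneg (Real.exp_nonneg _),
    Real.norm_of_nonneg (Real.exp_nonneg _), ← Real.exp_add, Real.exp_le_exp]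
  have h_square : a * ‖t‖ ≤ a ^ 2 / (4 * Real.pi) + Real.pi * ‖t‖ ^ 2 := by
    have h : a ^ 2 / (4 * Real.pi) + Real.pi * ‖t‖ ^ 2 - a * ‖t‖ =
        (a - 2 * Real.pi * ‖t‖) ^ 2 / (4 * Real.pi) := by
      field_simp
      ring
    have : 0 ≤ (a - 2 * Real.pi * ‖t‖) ^ 2 / (4 * Real.pi) := by positivity
    linarith
  have := mul_le_mul_of_nonneg_left (sq_norm_le_sum_sq t) Real.pi_pos.le
  linarith

theorem integrable_gaussianKernel : Integrable (gaussianKernel (ι := ι)) :=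
  superexpDecay_gaussianKernel.integrable continuous_gaussianKernel.aestronglyMeasurable

theorem fourierIntegral_gaussianKernel (w : ι → ℝ) :
    VectorFourier.fourierIntegral Real.fourierChar volume (dotProductBilin ℝ ℝ)
      (fun t : ι → ℝ ↦ (gaussianKernel t : ℂ)) w = gaussianKernel w := by
  have h := GaussianFourier.integral_cexp_neg_mul_sum_add (b := Real.pi) (ι := ι)
    (by simpa using Real.pi_pos) fun i ↦ -(2 * Real.pi * Complex.I * w i)
  rw [div_self (by exact_mod_cast Real.pi_ne_zero), Complex.one_cpow, one_mul] at h
  have h_left (t : ι → ℝ) : Real.fourierChar (-dotProductBilin ℝ ℝ t w) • (gaussianKernel t : ℂ) =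
      Complex.exp (-Real.pi * ∑ i, (t i : ℂ) ^ 2 +
        ∑ i, -(2 * Real.pi * Complex.I * w i) * t i) := by
    rw [Circle.smul_def, Real.fourierChar_apply, gaussianKernel, smul_eq_mul, Complex.ofReal_exp,
      ← Complex.exp_add, add_comm]
    congr 2
    · push_cast
      rfl
    · simp only [dotProductBilin_apply_apply, dotProduct, Finset.mul_sum, Finset.sum_mul,
        ← Finset.sum_neg_distrib, Complex.ofReal_sum]
      refine Finset.sum_congr rfl fun i _ ↦ ?_
      push_cast
      ring
  have h_right : (∑ i, (-(2 * Real.pi * Complex.I * w i)) ^ 2) / (4 * Real.pi) =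
      ((-Real.pi * ∑ i, w i ^ 2 : ℝ) : ℂ) := by
    push_cast
    rw [Finset.mul_sum, Finset.sum_div]
    refine Finset.sum_congr rfl fun i _ ↦ ?_
    field_simp
    linear_combination 4 * (w i : ℂ) ^ 2 * Complex.I_sq
  rw [VectorFourier.fourierIntegral, gaussianKernel, Complex.ofReal_exp, ← h_right, ← h]
  exact integral_congr_ae (.of_forall h_left)

theorem integral_gaussianKernel : ∫ t : ι → ℝ, gaussianKernel t = 1 := by
  have h := fourierIntegral_gaussianKernel (0 : ι → ℝ)
  have h_zero : gaussianKernel (0 : ι → ℝ) = 1 := by simp [gaussianKernel]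
  simpa [VectorFourier.fourierIntegral, h_zero, integral_complex_ofReal] using h

end Fourier

theorem exists_hasCompactSupport_eLpNorm_smul_sub_le {X F : Type*} [PseudoMetricSpace X]
    [ProperSpace X] [MeasurableSpace X] [BorelSpace X] [NormedAddCommGroup F] [NormedSpace ℝ F]
    {μ : Measure X} [SFinite μ] {ω : X → ℝ} (hω : LocallyIntegrable ω μ) {g : X → F}
    (hgm : AEStronglyMeasurable g μ) (hg : eLpNorm (fun x ↦ ω x • g x) 1 μ < ⊤) {ε : ℝ≥0∞}
    (hε : ε ≠ 0) :
    ∃ h : X → F, Continuous h ∧ HasCompactSupport h ∧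
      eLpNorm (fun x ↦ ω x • (g x - h x)) 1 μ ≤ ε := by
  set ν := μ.withDensity fun x ↦ ‖ω x‖ₑ
  have hac : ν ≪ μ := withDensity_absolutelyContinuous _ _
  have h_norm {k : X → F} (hk : AEStronglyMeasurable k μ) :
      ∫⁻ x, ‖k x‖ₑ ∂ν = eLpNorm (fun x ↦ ω x • k x) 1 μ := by
    rw [lintegral_withDensity_eq_lintegral_mul₀ hω.aestronglyMeasurable.enorm hk.enorm,
      eLpNorm_one_eq_lintegral_enorm]
    simp only [Pi.mul_apply, enorm_smul]
  have : IsLocallyFiniteMeasure ν := by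
    refine ⟨fun x ↦ ?_⟩
    obtain ⟨U, hU, hωU⟩ := hω x
    exact ⟨U, hU, (withDensity_apply' _ U).trans_lt hωU.2⟩
  obtain ⟨h, h_supp, h_le, h_cont, -⟩ :=
    Integrable.exists_hasCompactSupport_lintegral_sub_le (μ := ν)
      ⟨hgm.mono_ac hac, (h_norm hgm).trans_lt hg⟩ hε
  exact ⟨h, h_cont, h_supp, (h_norm (hgm.sub h_cont.aestronglyMeasurable)).symm.trans_le h_le⟩

section Beurling

variable {d : ℕ}

theorem SuperexpDecay.memAmalgam {f : (Fin d → ℝ) → ℂ} (hf : SuperexpDecay f) (hfm : Measurable f)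
    {ϑ : (Fin d → ℝ) → ℝ} (hϑ : IsBeurling ϑ) (p : ℝ) {r : ℝ} (hr : 0 < r) :
    MemAmalgam p r ϑ f := by
  obtain ⟨b, hb⟩ := hϑ.exists_isBigO_exp
  exact ⟨hfm, amalgamNorm_lt_top hr one_pos (hf.smul_of_isBigO_exp hb 1)⟩

theorem IsBeurling.locallyIntegrable {ϑ : (Fin d → ℝ) → ℝ} (hϑ : IsBeurling ϑ) :
    LocallyIntegrable ϑ := by
  obtain ⟨b, hb⟩ := hϑ.exists_isBigO_exp
  obtain ⟨C, hC⟩ := isBigO_top.1 hb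
  have h_cont : Continuous fun x : Fin d → ℝ ↦ C * ‖Real.exp (b * ‖x‖)‖ := by fun_prop
  exact h_cont.locallyIntegrable.mono hϑ.1.aestronglyMeasurable
    (.of_forall fun x ↦ (hC x).trans (le_abs_self _))

theorem fourierT_eq_fourierIntegral (f : (Fin d → ℝ) → ℂ) :
    fourierT f =
      VectorFourier.fourierIntegral Real.fourierChar volume (dotProductBilin ℝ ℝ) f := by
  ext ξ
  refine integral_congr_ae (.of_forall fun x ↦ ?_)
  simp only [Circle.smul_def, Real.fourierChar_apply, dotProductBilin_apply_apply, dotProduct,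
    smul_eq_mul]
  push_cast
  ring_nf

theorem continuous_fourierT {f : (Fin d → ℝ) → ℂ} (hf : Integrable f) :
    Continuous (fourierT f) := by
  rw [fourierT_eq_fourierIntegral]
  exact VectorFourier.fourierIntegral_continuous Real.continuous_fourierChar
    continuous_dotProductBilin hf

theorem norm_fourierT_le_integral_norm (f : (Fin d → ℝ) → ℂ) (ξ : Fin d → ℝ) :
    ‖fourierT f ξ‖ ≤ ∫ x, ‖f x‖ := by
  rw [fourierT_eq_fourierIntegral]
  exact VectorFourier.norm_fourierIntegral_le_integral_norm _ _ _ f ξ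

theorem fourierT_mollify_gaussianKernel {h : (Fin d → ℝ) → ℂ} (hh : Integrable h) (s : ℝ) :
    fourierT (mollify volume gaussianKernel s h) =
      fun ξ ↦ fourierT h ξ • (gaussianKernel (s • ξ) : ℂ) := by
  ext ξ
  rw [fourierT_eq_fourierIntegral, fourierT_eq_fourierIntegral,
    fourierIntegral_mollify Real.continuous_fourierChar (continuous_dotProductBilin (ι := Fin d))
      integrable_gaussianKernel hh,
    fourierIntegral_gaussianKernel, smul_eq_mul, smul_eq_mul, mul_comm]

theorem superexpDecay_fourierT_mollify_gaussianKernel {h : (Fin d → ℝ) → ℂ} (hh : Integrable h)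
    {s : ℝ} (hs : s ≠ 0) : SuperexpDecay (fourierT (mollify volume gaussianKernel s h)) := by
  have h_gauss : SuperexpDecay fun t : Fin d → ℝ ↦ (gaussianKernel t : ℂ) :=
    fun a ↦ Complex.isBigO_ofReal_left.2 (superexpDecay_gaussianKernel a)
  have h_bdd : fourierT h =O[⊤] fun ξ : Fin d → ℝ ↦ Real.exp (0 * ‖ξ‖) :=
    isBigO_top.2 ⟨∫ x, ‖h x‖, fun ξ ↦ by simpa using norm_fourierT_le_integral_norm h ξ⟩
  rw [fourierT_mollify_gaussianKernel hh]
  exact (h_gauss.comp_smul hs).smul_of_isBigO_exp h_bdd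

theorem memA_mollify_gaussianKernel {h : (Fin d → ℝ) → ℂ} (hhc : Continuous h)
    (hh : SuperexpDecay h) {ϑ₁ ϑ₂ : (Fin d → ℝ) → ℝ} (hϑ₁ : IsBeurling ϑ₁) (hϑ₂ : IsBeurling ϑ₂)
    (p q : ℝ) {r s : ℝ} (hr : 0 < r) (hs : s ≠ 0) :
    MemA p q r ϑ₁ ϑ₂ (mollify volume gaussianKernel s h) := by
  have hhi : Integrable h := hh.integrable hhc.aestronglyMeasurable
  have h_decay : SuperexpDecay (mollify volume gaussianKernel s h) :=
    superexpDecay_mollify continuous_gaussianKernel.aestronglyMeasurable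
      superexpDecay_gaussianKernel hh s
  obtain ⟨M, hM⟩ := hh.exists_norm_le
  have h_cont : Continuous (mollify volume gaussianKernel s h) :=
    (continuous_mollify integrable_gaussianKernel hhc hM).comp (.prodMk_right s)
  have hhi' := h_decay.integrable (μ := volume) h_cont.aestronglyMeasurable
  exact ⟨h_decay.memAmalgam h_cont.measurable hϑ₁ p one_pos,
    (superexpDecay_fourierT_mollify_gaussianKernel hhi hs).memAmalgam
      (continuous_fourierT hhi').measurable hϑ₂ q hr⟩

theorem exists_memA_eLpNorm_smul_sub_lt {h : (Fin d → ℝ) → ℂ} (hhc : Continuous h)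
    (hh : SuperexpDecay h) {ϑ₁ ϑ₂ : (Fin d → ℝ) → ℝ} (hϑ₁ : IsBeurling ϑ₁) (hϑ₂ : IsBeurling ϑ₂)
    (p q : ℝ) {r : ℝ} (hr : 0 < r) {ε : ℝ≥0∞} (hε : 0 < ε) :
    ∃ f, MemA p q r ϑ₁ ϑ₂ f ∧ eLpNorm (fun x ↦ ϑ₁ x • (h x - f x)) 1 volume < ε := by
  obtain ⟨b, hb⟩ := hϑ₁.exists_isBigO_exp
  have h_lim := tendsto_eLpNorm_smul_sub_mollify
    (continuous_gaussianKernel.aestronglyMeasurable (μ := volume)) superexpDecay_gaussianKernel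
    integral_gaussianKernel hhc hh hϑ₁.1 hb
  obtain ⟨s, hs_lt, hs⟩ :=
    (((h_lim.eventually_lt_const hε).filter_mono nhdsWithin_le_nhds).and
      (self_mem_nhdsWithin (s := {0}ᶜ))).exists
  exact ⟨_, memA_mollify_gaussianKernel hhc hh hϑ₁ hϑ₂ p q hr hs, hs_lt⟩

theorem eLpNorm_le_ANorm (q r : ℝ) (ϑ₁ ϑ₂ : (Fin d → ℝ) → ℝ) (f : (Fin d → ℝ) → ℂ) :
    eLpNorm (fun x ↦ ϑ₁ x • f x) 1 volume ≤ ANorm 1 q r ϑ₁ ϑ₂ f := by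
  rw [ANorm, amalgamNorm_one_one]
  exact le_self_add

end Beurling

theorem A_dense_in_beurling_algebra_general {d : ℕ} (q r : ℝ) (_hq : 0 < q) (hr : 0 < r)
    (ϑ₁ ϑ₂ : (Fin d → ℝ) → ℝ) (h1 : IsBeurling ϑ₁) (h2 : IsBeurling ϑ₂) :
    (∀ f : (Fin d → ℝ) → ℂ, MemA 1 q r ϑ₁ ϑ₂ f →
      eLpNorm (fun x ↦ ϑ₁ x • f x) 1 volume ≤ ANorm 1 q r ϑ₁ ϑ₂ f) ∧
    (∀ g : (Fin d → ℝ) → ℂ, Measurable g →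
      eLpNorm (fun x ↦ ϑ₁ x • g x) 1 volume < ⊤ →
      ∀ ε : ℝ, 0 < ε → ∃ f : (Fin d → ℝ) → ℂ, MemA 1 q r ϑ₁ ϑ₂ f ∧
        eLpNorm (fun x ↦ ϑ₁ x • (g x - f x)) 1 volume < ENNReal.ofReal ε) := by
  refine ⟨fun f _ ↦ eLpNorm_le_ANorm q r ϑ₁ ϑ₂ f, fun g hgm hg ε hε ↦ ?_⟩
  have hε' : 0 < ENNReal.ofReal (ε / 2) := by simpa
  obtain ⟨h, hhc, h_supp, hgh⟩ := exists_hasCompactSupport_eLpNorm_smul_sub_le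
    h1.locallyIntegrable hgm.aestronglyMeasurable hg hε'.ne'
  obtain ⟨f, hf, hhf⟩ := exists_memA_eLpNorm_smul_sub_lt hhc
    (superexpDecay_of_hasCompactSupport hhc h_supp) h1 h2 1 q hr hε'
  refine ⟨f, hf, ?_⟩
  calc eLpNorm (fun x ↦ ϑ₁ x • (g x - f x)) 1 volume
      = eLpNorm ((fun x ↦ ϑ₁ x • (g x - h x)) + fun x ↦ ϑ₁ x • (h x - f x)) 1 volume := by
        simp only [Pi.add_def, ← smul_add, sub_add_sub_cancel]
    _ ≤ eLpNorm (fun x ↦ ϑ₁ x • (g x - h x)) 1 volume +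
          eLpNorm (fun x ↦ ϑ₁ x • (h x - f x)) 1 volume :=
        eLpNorm_add_le (h1.1.smul (hgm.sub hhc.measurable)).aestronglyMeasurable
          (h1.1.smul (hhc.measurable.sub hf.1.1)).aestronglyMeasurable le_rfl
    _ < ENNReal.ofReal (ε / 2) + ENNReal.ofReal (ε / 2) :=
        ENNReal.add_lt_add_of_le_of_lt (hgh.trans_lt ENNReal.ofReal_lt_top).ne hgh hhf
    _ = ENNReal.ofReal ε := by
        rw [← ENNReal.ofReal_add (by positivity) (by positivity), add_halves]

/-- if `ϑ₁` satisfies the Beurling–Domar condition, then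
`A^{1,1,q,r}_{ϑ₁,ϑ₂}(ℝ^d)` is a dense subspace of the Beurling algebra `L¹_{ϑ₁}(ℝ^d)`
and `‖f‖_{1,ϑ₁} ≤ ‖f‖_A` for every `f` in it. -/
theorem A_dense_in_beurling_algebra {d : ℕ} (q r : ℝ) (hq : 1 ≤ q) (hr : 1 ≤ r)
    (ϑ₁ ϑ₂ : (Fin d → ℝ) → ℝ) (h1 : IsBeurling ϑ₁) (h2 : IsBeurling ϑ₂)
    (hBD : BeurlingDomar ϑ₁) :
    (∀ f : (Fin d → ℝ) → ℂ, MemA 1 q r ϑ₁ ϑ₂ f →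
      eLpNorm (fun x => ϑ₁ x • f x) 1 volume ≤ ANorm 1 q r ϑ₁ ϑ₂ f) ∧
    (∀ g : (Fin d → ℝ) → ℂ, Measurable g →
      eLpNorm (fun x => ϑ₁ x • g x) 1 volume < ⊤ →
      ∀ ε : ℝ, 0 < ε → ∃ f : (Fin d → ℝ) → ℂ, MemA 1 q r ϑ₁ ϑ₂ f ∧
        eLpNorm (fun x => ϑ₁ x • (g x - f x)) 1 volume < ENNReal.ofReal ε) :=
  A_dense_in_beurling_algebra_general q r (one_pos.trans_le hq) (one_pos.trans_le hr) ϑ₁ ϑ₂ h1 h2
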